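/- Fix α₀, α₁ ∈ ℂ with |α₀|+|α₁| ≠ 0. Suppose λ ∈ 𝒩 and that there is no nontrivial solution y of −y″+(q−λ)y=0 with y ∈ L₂(ℝ₊) and α₀y(0)+α₁y′(0)=0 (i.e., λ is not an eigenvalue). Then the set { −y″+(q−λ)y : y and y′ locally absolutely continuous on ℝ₊, y compactly supported, −y″+qy ∈ L₂(ℝ₊), α₀y(0)+α₁y′(0)=0 } is dense in L₂(ℝ₊). (Consequently the closure of the minimal operator L_U⁰ coincides with the maximal operator L_U: the definite case is realized.) -/

import Mathlib

/-!
Write `Q = q - lam`. The theorem holds because the bilinear annihilator of the range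
`{-y'' + Q y}` over compactly supported `y` satisfying the boundary condition is contained in the
line spanned by the solution `φ` of `-φ'' + Q φ = 0` with `φ(0) = α₁`, `φ'(0) = -α₀`, and this line
meets `L₂(ℝ₊)` only in `0` when `lam` is not an eigenvalue.

The proof is a direct version of this duality. A compactly supported `f` is in the range exactly
when `∫ f φ = 0`: solve backwards with zero data at the right end of the support and read the
boundary condition off the Wronskian with `φ` (`exists_compactSupport_isSol`). Since `φ` is a
nontrivial solution satisfying the boundary condition, it is not in `L₂`, so an arbitrary `h ∈ L₂`
is approximated by a compactly supported `f` orthogonal to `φ`, subtracting from a cut-off of `h` a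
multiple of `conj φ` on a long interval, whose norm is as small as desired
(`exists_orthogonal_approx`).

The coefficients being merely locally integrable, the initial value problem is solved by successive
approximations (`exists_isSol`), whose factorial decay rests on the product rule for locally
absolutely continuous functions (`LocACOn.mul`).
-/

open MeasureTheory Filter Topology Complex

noncomputable section

/-- The open sector `Π_κ = {z ≠ 0 : arg z ∈ (-π+κ, π-κ)}`. -/
def PiSector (κ : ℝ) : Set ℂ :=
  {z : ℂ | z ≠ 0 ∧ -Real.pi + κ < z.arg ∧ z.arg < Real.pi - κ}

/-- `f` is locally absolutely continuous on `[a,∞)` with a.e. derivative `f'`: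
`f'` is locally integrable there and `f` is recovered from `f'` by integration. -/
def LocACOn (f f' : ℝ → ℂ) (a : ℝ) : Prop :=
  (∀ b, a ≤ b → IntervalIntegrable f' volume a b) ∧
  ∀ x, a ≤ x → f x = f a + ∫ t in a..x, f' t

/-- `y` (with first derivative `y'`) is a solution of `-y'' + q y = f` on `ℝ₊`:
`y, y'` are locally absolutely continuous on `[0,∞)` and the a.e. derivative of
`y'` equals `q y - f`. -/
def IsSol (q f y y' : ℝ → ℂ) : Prop :=
  LocACOn y y' 0 ∧ LocACOn y' (fun x => q x * y x - f x) 0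

/-- `y` is nontrivial on `ℝ₊`. -/
def NontrivialSol (y : ℝ → ℂ) : Prop := ∃ x, 0 ≤ x ∧ y x ≠ 0

/-- membership in the weighted space `L₂(ℝ₊, w)`. -/
def MemL2 (w : ℝ → ℝ) (f : ℝ → ℂ) : Prop :=
  AEStronglyMeasurable f (volume.restrict (Set.Ici (0:ℝ))) ∧
  IntegrableOn (fun x => w x * ‖f x‖ ^ 2) (Set.Ici (0:ℝ)) volume

/-- the branch `p = √q` with positive real part (principal branch). -/
def sqrtQ (q : ℝ → ℂ) (x : ℝ) : ℂ := (q x) ^ ((1 : ℂ) / 2)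

/-- the a.e. derivative of `sqrtQ q`, where `q'` is the a.e. derivative of `q`. -/
def sqrtQD (q q' : ℝ → ℂ) (x : ℝ) : ℂ := q' x / (2 * sqrtQ q x)

/-- the weight `ρ = Re p - (1/2)|p'/p|`. -/
def rho (q q' : ℝ → ℂ) (x : ℝ) : ℝ :=
  (sqrtQ q x).re - (1 / 2) * ‖sqrtQD q q' x / sqrtQ q x‖

/-- Condition A for `q` on `[x₀,∞)` with constant `C`, where `q'` is the
a.e. derivative of `q`: `q ∈ L¹loc(ℝ₊)`, `q` is locally absolutely continuous
on `[x₀,∞)`, `q` takes values in a sector `Π_κ` on `[x₀,∞)`, the branch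
`p = √q` has positive real part there, and
`Re p ≥ C + (1/2)|p'/p|` a.e. on `[x₀,∞)`. -/
def CondA (q q' : ℝ → ℂ) (x₀ C : ℝ) : Prop :=
  LocallyIntegrableOn q (Set.Ici (0:ℝ)) volume ∧
  LocACOn q q' x₀ ∧
  (∃ κ, 0 ≤ κ ∧ ∀ x, x₀ ≤ x → q x ∈ PiSector κ) ∧
  (∀ x, x₀ ≤ x → 0 < (sqrtQ q x).re) ∧
  0 < C ∧
  ∀ᵐ x : ℝ, x₀ ≤ x → C + (1 / 2) * ‖sqrtQD q q' x / sqrtQ q x‖ ≤ (sqrtQ q x).re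

/-- The set `𝒩` of spectral parameters `lam` such that `q - lam` satisfies
condition A for `x ≥ x₁(lam)` for some `x₁(lam) ≥ 0` (note `(q - lam)' = q'`). -/
def NSet (q q' : ℝ → ℂ) : Set ℂ :=
  {lam : ℂ | ∃ x₁ C, 0 ≤ x₁ ∧ CondA (fun x => q x - lam) q' x₁ C}

/-! ### Calculus for locally absolutely continuous functions -/

/-- A locally integrable function on `[0,∞)`, extended by zero, is integrable on every interval. -/
lemma ii_indicator {f : ℝ → ℂ} (hf : ∀ b, 0 ≤ b → IntervalIntegrable f volume 0 b) (a b : ℝ) :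
    IntervalIntegrable (Set.indicator (Set.Ici 0) f) volume a b := by
  have key : ∀ c : ℝ, IntervalIntegrable (Set.indicator (Set.Ici 0) f) volume 0 c := by
    intro c
    rcases le_total 0 c with hc | hc
    · refine (hf c hc).congr fun t ht => ?_
      rw [Set.uIoc_of_le hc] at ht
      simp [Set.indicator, ht.1.le]
    · have h0 : IntervalIntegrable (fun _ : ℝ => (0 : ℂ)) volume c 0 := intervalIntegrable_const
      refine (h0.congr_ae ?_).symm
      rw [Filter.EventuallyEq, ae_restrict_iff' measurableSet_uIoc]
      have : ∀ᵐ t : ℝ, t ≠ 0 := by simp [ae_iff, measure_singleton]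
      filter_upwards [this] with t ht1 ht
      rw [Set.uIoc_of_le hc] at ht
      have : ¬ (0 ≤ t) := fun h => ht1 (le_antisymm ht.2 h)
      simp [Set.indicator, this]
  exact (key a).symm.trans (key b)

lemma LocACOn.congr {F f g : ℝ → ℂ} (h : LocACOn F f 0) (hfg : ∀ x, 0 ≤ x → f x = g x) :
    LocACOn F g 0 := by
  refine ⟨fun b hb => (h.1 b hb).congr fun t ht => ?_, fun x hx => ?_⟩
  · rw [Set.uIoc_of_le hb] at ht
    exact hfg t ht.1.le
  · rw [h.2 x hx]
    congr 1
    refine intervalIntegral.integral_congr fun t ht => ?_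
    rw [Set.uIcc_of_le hx] at ht
    exact hfg t ht.1

lemma LocACOn.continuousOn {F f : ℝ → ℂ} (h : LocACOn F f 0) :
    ContinuousOn F (Set.Ici 0) := by
  have hc : Continuous fun x => F 0 + ∫ t in (0:ℝ)..x, Set.indicator (Set.Ici 0) f t :=
    continuous_const.add (intervalIntegral.continuous_primitive (ii_indicator h.1) 0)
  refine hc.continuousOn.congr fun x hx => ?_
  rw [h.2 x hx]
  congr 1
  refine intervalIntegral.integral_congr fun t ht => ?_
  rw [Set.uIcc_of_le hx] at ht
  simp [Set.indicator, ht.1]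

lemma LocACOn.ac {F f : ℝ → ℂ} (h : LocACOn F f 0) {b : ℝ} (hb : 0 ≤ b) :
    AbsolutelyContinuousOnInterval F 0 b := by
  have hG := (h.1 b hb).norm.absolutelyContinuousOnInterval_intervalIntegral
    (c := 0) (by simp)
  rw [absolutelyContinuousOnInterval_iff] at hG ⊢
  intro ε hε
  obtain ⟨δ, hδ, H⟩ := hG ε hε
  refine ⟨δ, hδ, fun E hE hlt => lt_of_le_of_lt (Finset.sum_le_sum fun i hi => ?_) (H E hE hlt)⟩
  -- each increment of `F` is bounded by the corresponding increment of `∫ ‖f‖`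
  obtain ⟨h1, h2⟩ := hE.1 i (Finset.mem_range.1 hi |> fun h => by simpa using h)
  rw [Set.uIcc_of_le hb] at h1 h2
  have hi1 := h.1 _ h1.1
  have hi2 := h.1 _ h2.1
  rw [dist_eq_norm, dist_eq_norm, h.2 _ h1.1, h.2 _ h2.1, add_sub_add_left_eq_sub,
    intervalIntegral.integral_interval_sub_left hi1 hi2,
    intervalIntegral.integral_interval_sub_left hi1.norm hi2.norm]
  exact intervalIntegral.norm_integral_le_abs_integral_norm

/-- Product rule: locally absolutely continuous functions form an algebra, with the Leibniz rule.
The difference of both sides is absolutely continuous with a.e. derivative zero. -/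
lemma LocACOn.mul {F f G g : ℝ → ℂ} (hF : LocACOn F f 0) (hG : LocACOn G g 0) :
    LocACOn (fun x => F x * G x) (fun x => f x * G x + F x * g x) 0 := by
  have hint : ∀ b, 0 ≤ b → IntervalIntegrable (fun x => f x * G x + F x * g x) volume 0 b := by
    intro b hb
    have hs : Set.uIcc 0 b ⊆ Set.Ici (0:ℝ) := by
      rw [Set.uIcc_of_le hb]; exact Set.Icc_subset_Ici_self
    exact ((hF.1 b hb).mul_continuousOn (hG.continuousOn.mono hs)).add
      ((hG.1 b hb).continuousOn_mul (hF.continuousOn.mono hs))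
  refine ⟨hint, fun b hb => ?_⟩
  have hP : LocACOn (fun x => ∫ t in (0:ℝ)..x, f t * G t + F t * g t)
      (fun x => f x * G x + F x * g x) 0 := ⟨hint, fun x hx => by simp⟩
  have hac : AbsolutelyContinuousOnInterval
      (fun x => F x * G x - ∫ t in (0:ℝ)..x, f t * G t + F t * g t) 0 b :=
    ((hF.ac hb).fun_smul (hG.ac hb)).fun_sub (hP.ac hb)
  have hder : ∀ {H h : ℝ → ℂ}, LocACOn H h 0 →
      ∀ᵐ x : ℝ, x ∈ Set.uIcc 0 b → HasDerivAt H (h x) x := by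
    intro H h hH
    have h0 : ∀ᵐ t : ℝ, t ≠ 0 := by simp [ae_iff, measure_singleton]
    filter_upwards [(hH.1 b hb).ae_hasDerivAt_integral, h0] with x hx hx0 hxb
    rw [Set.uIcc_of_le hb] at hx hxb
    have hpos : 0 < x := lt_of_le_of_ne hxb.1 (Ne.symm hx0)
    refine ((hx hxb 0 ⟨le_rfl, hb⟩).const_add (H 0)).congr_of_eventuallyEq ?_
    filter_upwards [lt_mem_nhds hpos] with t ht
    exact hH.2 t ht.le
  obtain ⟨C, hC⟩ := hac.const_of_ae_hasDerivAt_zero (by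
    filter_upwards [hder hF, hder hG, hder hP] with x h1 h2 h3 hx
    have := ((h1 hx).mul (h2 hx)).sub (h3 hx)
    rw [sub_self] at this
    exact this)
  have e0 := hC 0 (by simp)
  have eb := hC b (by simp)
  simp only [intervalIntegral.integral_same, sub_zero] at e0
  change F b * G b = F 0 * G 0 + ∫ t in (0:ℝ)..b, f t * G t + F t * g t
  rw [e0, ← eb]; ring

/-- Reflection `x ↦ b - x` of a function vanishing at `0`, continued by zero beyond `b`. -/
lemma LocACOn.reflect {F f : ℝ → ℂ} (hF : LocACOn F f 0) (h0 : F 0 = 0) (b : ℝ) :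
    LocACOn (fun x => F (max (b - x) 0))
      (fun x => - Set.indicator (Set.Ici 0) f (b - x)) 0 := by
  have hI := ii_indicator hF.1
  have hval : ∀ t, F (max t 0) = ∫ s in (0:ℝ)..t, Set.indicator (Set.Ici 0) f s := by
    intro t
    rcases le_total 0 t with ht | ht
    · rw [max_eq_left ht, hF.2 t ht, h0, zero_add]
      refine intervalIntegral.integral_congr fun s hs => ?_
      rw [Set.uIcc_of_le ht] at hs
      simp [Set.indicator, hs.1]
    · rw [max_eq_right ht, h0]
      symm
      apply intervalIntegral.integral_zero_ae
      have : ∀ᵐ t : ℝ, t ≠ 0 := by simp [ae_iff, measure_singleton]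
      filter_upwards [this] with s hs1 hs
      rw [Set.uIoc_of_ge ht] at hs
      have : ¬ (0 ≤ s) := fun h => hs1 (le_antisymm hs.2 h)
      simp [Set.indicator, this]
  refine ⟨fun c _ => ?_, fun x _ => ?_⟩
  · have h := (hI b (b - c)).comp_sub_left b
    rw [sub_self, sub_sub_cancel] at h
    exact h.neg
  · simp only [hval, intervalIntegral.integral_neg]
    rw [intervalIntegral.integral_comp_sub_left (fun s => Set.indicator (Set.Ici 0) f s) b,
      sub_zero, ← intervalIntegral.integral_interval_sub_left (hI 0 b) (hI 0 (b - x))]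
    ring

/-! ### Existence of solutions for locally integrable coefficients -/

/-- Successive approximations for the system `(u, v)' = (v, Q u - f)`, written as a series:
the forcing term and the initial data enter the zeroth term, and each further term is obtained by
integrating the homogeneous system. -/
def picardTerm (Q f : ℝ → ℂ) (a a' : ℂ) : ℕ → (ℝ → ℂ) × (ℝ → ℂ)
  | 0 => (fun _ => a, fun x => a' - ∫ t in (0:ℝ)..x, f t)
  | n + 1 => (fun x => ∫ t in (0:ℝ)..x, (picardTerm Q f a a' n).2 t,
      fun x => ∫ t in (0:ℝ)..x, Q t * (picardTerm Q f a a' n).1 t)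

lemma picardTerm_continuous {Q f : ℝ → ℂ} (hQ : ∀ a b, IntervalIntegrable Q volume a b)
    (hf : ∀ a b, IntervalIntegrable f volume a b) (a a' : ℂ) (n : ℕ) :
    Continuous (picardTerm Q f a a' n).1 ∧ Continuous (picardTerm Q f a a' n).2 := by
  induction n with
  | zero =>
    exact ⟨continuous_const, continuous_const.sub (intervalIntegral.continuous_primitive hf 0)⟩
  | succ n ih =>
    exact ⟨intervalIntegral.continuous_primitive (fun c d => ih.2.intervalIntegrable c d) 0,
      intervalIntegral.continuous_primitive
        (fun c d => (hQ c d).mul_continuousOn ih.1.continuousOn) 0⟩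

/-- `∫₀ˣ k Kⁿ = Kⁿ⁺¹ / (n+1)` for `K = ∫₀ k`, with `k` merely integrable. -/
lemma integral_mul_primitive_pow {k : ℝ → ℝ} (hk : ∀ a b, IntervalIntegrable k volume a b)
    (n : ℕ) {x : ℝ} (hx : 0 ≤ x) :
    ∫ t in (0:ℝ)..x, k t * (∫ s in (0:ℝ)..t, k s) ^ n
      = (∫ s in (0:ℝ)..x, k s) ^ (n + 1) / (n + 1) := by
  have hK : LocACOn (fun x => ((∫ s in (0:ℝ)..x, k s : ℝ) : ℂ)) (fun x => (k x : ℂ)) 0 := by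
    refine ⟨fun b _ => ⟨(hk 0 b).1.ofReal, (hk 0 b).2.ofReal⟩, fun x _ => ?_⟩
    simp [intervalIntegral.integral_ofReal]
  have hpow : ∀ n : ℕ, LocACOn (fun x => ((∫ s in (0:ℝ)..x, k s : ℝ) : ℂ) ^ (n + 1))
      (fun x => (n + 1) * ((k x : ℂ) * ((∫ s in (0:ℝ)..x, k s : ℝ) : ℂ) ^ n)) 0 := by
    intro n
    induction n with
    | zero => simpa using hK
    | succ n ih =>
      have := ih.mul hK
      simp only [← pow_succ] at this
      refine this.congr fun x _ => ?_
      push_cast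
      ring
  have h := (hpow n).2 x hx
  simp only [intervalIntegral.integral_same, Complex.ofReal_zero, ne_eq, Nat.add_eq_zero_iff,
    one_ne_zero, and_false, not_false_eq_true, zero_pow, zero_add,
    intervalIntegral.integral_const_mul] at h
  have h2 : (∫ s in (0:ℝ)..x, k s) ^ (n + 1)
      = (n + 1) * ∫ t in (0:ℝ)..x, k t * (∫ s in (0:ℝ)..t, k s) ^ n := by
    have e : ∀ t : ℝ, (k t : ℂ) * ((∫ s in (0:ℝ)..t, k s : ℝ) : ℂ) ^ n
        = ((k t * (∫ s in (0:ℝ)..t, k s) ^ n : ℝ) : ℂ) := by intro t; push_cast; ring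
    rw [intervalIntegral.integral_congr (fun t _ => e t), intervalIntegral.integral_ofReal] at h
    exact_mod_cast h
  rw [h2]
  field_simp

/-- Factorial decay of the successive approximations, `k = 1 + ‖Q‖`. -/
lemma picardTerm_bound {Q f : ℝ → ℂ} (hQ : ∀ a b, IntervalIntegrable Q volume a b)
    (a a' : ℂ) {b M : ℝ}
    (hM : ∀ x ∈ Set.Icc 0 b, ‖a‖ ≤ M ∧ ‖a' - ∫ t in (0:ℝ)..x, f t‖ ≤ M) (n : ℕ) :
    ∀ x ∈ Set.Icc 0 b,
      ‖(picardTerm Q f a a' n).1 x‖ ≤ M * ((∫ s in (0:ℝ)..x, (1 + ‖Q s‖)) ^ n / n.factorial) ∧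
      ‖(picardTerm Q f a a' n).2 x‖ ≤ M * ((∫ s in (0:ℝ)..x, (1 + ‖Q s‖)) ^ n / n.factorial) := by
  have hk : ∀ c d, IntervalIntegrable (fun s => 1 + ‖Q s‖) volume c d :=
    fun c d => intervalIntegrable_const.add (hQ c d).norm
  induction n with
  | zero => intro x hx; simpa [picardTerm] using hM x hx
  | succ n ih =>
    intro x hx
    set K : ℝ → ℝ := fun x => ∫ s in (0:ℝ)..x, (1 + ‖Q s‖) with hKdef
    have hKc : Continuous K := intervalIntegral.continuous_primitive hk 0
    have hM0 : 0 ≤ M := (norm_nonneg a).trans (hM x hx).1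
    have hint : IntervalIntegrable
        (fun t => (M / n.factorial) * ((1 + ‖Q t‖) * K t ^ n)) volume 0 x :=
      ((hk 0 x).mul_continuousOn (hKc.pow n).continuousOn).const_mul _
    have hval : ∫ t in (0:ℝ)..x, (M / n.factorial) * ((1 + ‖Q t‖) * K t ^ n)
        = M * (K x ^ (n + 1) / (n + 1).factorial) := by
      rw [intervalIntegral.integral_const_mul, integral_mul_primitive_pow hk n hx.1,
        Nat.factorial_succ]
      push_cast
      simp only [hKdef]
      field_simp
    have hKpos : ∀ t, 0 ≤ t → 0 ≤ K t := fun t ht =>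
      intervalIntegral.integral_nonneg ht fun s _ => by positivity
    have hpt : ∀ t ∈ Set.Ioc 0 x, 0 ≤ M * (K t ^ n / n.factorial) ∧
        ‖(picardTerm Q f a a' n).1 t‖ ≤ M * (K t ^ n / n.factorial) ∧
        ‖(picardTerm Q f a a' n).2 t‖ ≤ M * (K t ^ n / n.factorial) := by
      intro t ht
      have := hKpos t ht.1.le
      exact ⟨by positivity, ih t ⟨ht.1.le, ht.2.trans hx.2⟩⟩
    have hre : ∀ t, (M / n.factorial) * ((1 + ‖Q t‖) * K t ^ n)
        = M * (K t ^ n / n.factorial) + ‖Q t‖ * (M * (K t ^ n / n.factorial)) := by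
      intro t; ring
    rw [← hval]
    constructor
    · refine intervalIntegral.norm_integral_le_of_norm_le hx.1 (ae_of_all _ fun t ht => ?_) hint
      obtain ⟨h0, -, h2⟩ := hpt t ht
      rw [hre]
      have := mul_nonneg (norm_nonneg (Q t)) h0
      linarith
    · refine intervalIntegral.norm_integral_le_of_norm_le hx.1 (ae_of_all _ fun t ht => ?_) hint
      obtain ⟨h0, h1, -⟩ := hpt t ht
      rw [hre, norm_mul]
      have := mul_le_mul_of_nonneg_left h1 (norm_nonneg (Q t))
      linarith

/-- Existence for the initial value problem on `[0,∞)`; Mathlib's Picard–Lindelöf theorem does not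
apply because `Q` and `f` are only locally integrable. -/
lemma exists_isSol {Q f : ℝ → ℂ} (hQ : ∀ a b, IntervalIntegrable Q volume a b)
    (hf : ∀ a b, IntervalIntegrable f volume a b) (a a' : ℂ) :
    ∃ y y' : ℝ → ℂ, IsSol Q f y y' ∧ y 0 = a ∧ y' 0 = a' := by
  set u : ℕ → ℝ → ℂ := fun n => (picardTerm Q f a a' n).1 with hu
  set v : ℕ → ℝ → ℂ := fun n => (picardTerm Q f a a' n).2 with hv
  have huc : ∀ n, Continuous (u n) := fun n => (picardTerm_continuous hQ hf a a' n).1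
  have hvc : ∀ n, Continuous (v n) := fun n => (picardTerm_continuous hQ hf a a' n).2
  have hus : ∀ n x, u (n + 1) x = ∫ t in (0:ℝ)..x, v n t := fun n x => rfl
  have hvs : ∀ n x, v (n + 1) x = ∫ t in (0:ℝ)..x, Q t * u n t := fun n x => rfl
  have hk : ∀ c d, IntervalIntegrable (fun s => 1 + ‖Q s‖) volume c d :=
    fun c d => intervalIntegrable_const.add (hQ c d).norm
  -- a summable majorant, uniform on each `[0,b]`
  have hB : ∀ b, 0 ≤ b → ∃ B : ℕ → ℝ, Summable B ∧
      ∀ n, ∀ x ∈ Set.Icc 0 b, ‖u n x‖ ≤ B n ∧ ‖v n x‖ ≤ B n := by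
    intro b hb
    obtain ⟨M₁, hM₁⟩ := isCompact_Icc.exists_bound_of_continuousOn (hvc 0).continuousOn
      (s := Set.Icc 0 b)
    set M := max ‖a‖ M₁
    have hM : ∀ x ∈ Set.Icc 0 b, ‖a‖ ≤ M ∧ ‖a' - ∫ t in (0:ℝ)..x, f t‖ ≤ M :=
      fun x hx => ⟨le_max_left _ _, (hM₁ x hx).trans (le_max_right _ _)⟩
    have hM0 : 0 ≤ M := (norm_nonneg a).trans (le_max_left _ _)
    refine ⟨fun n => M * ((∫ s in (0:ℝ)..b, (1 + ‖Q s‖)) ^ n / n.factorial),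
      (Real.summable_pow_div_factorial _).mul_left M, fun n x hx => ?_⟩
    have hmono : M * ((∫ s in (0:ℝ)..x, (1 + ‖Q s‖)) ^ n / n.factorial)
        ≤ M * ((∫ s in (0:ℝ)..b, (1 + ‖Q s‖)) ^ n / n.factorial) := by
      have h0 : 0 ≤ ∫ s in (0:ℝ)..x, (1 + ‖Q s‖) :=
        intervalIntegral.integral_nonneg hx.1 fun s _ => by positivity
      have h1 : (∫ s in (0:ℝ)..x, (1 + ‖Q s‖)) ≤ ∫ s in (0:ℝ)..b, (1 + ‖Q s‖) :=
        intervalIntegral.integral_mono_interval le_rfl hx.1 hx.2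
          (ae_of_all _ fun s => by positivity) (hk 0 b)
      gcongr
    have := picardTerm_bound hQ a a' hM n x hx
    exact ⟨this.1.trans hmono, this.2.trans hmono⟩
  have hsu : ∀ x, 0 ≤ x → HasSum (fun n => u n x) (∑' n, u n x) := by
    intro x hx
    obtain ⟨B, hBs, hBb⟩ := hB x hx
    exact (Summable.of_norm_bounded hBs fun n => (hBb n x ⟨hx, le_rfl⟩).1).hasSum
  have hsv : ∀ x, 0 ≤ x → HasSum (fun n => v n x) (∑' n, v n x) := by
    intro x hx
    obtain ⟨B, hBs, hBb⟩ := hB x hx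
    exact (Summable.of_norm_bounded hBs fun n => (hBb n x ⟨hx, le_rfl⟩).2).hasSum
  have hcu : ∀ b, 0 ≤ b → ContinuousOn (fun x => ∑' n, u n x) (Set.uIcc 0 b) := by
    intro b hb
    obtain ⟨B, hBs, hBb⟩ := hB b hb
    rw [Set.uIcc_of_le hb]
    exact continuousOn_tsum (fun n => (huc n).continuousOn) hBs fun n x hx => (hBb n x hx).1
  have hcv : ∀ b, 0 ≤ b → ContinuousOn (fun x => ∑' n, v n x) (Set.uIcc 0 b) := by
    intro b hb
    obtain ⟨B, hBs, hBb⟩ := hB b hb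
    rw [Set.uIcc_of_le hb]
    exact continuousOn_tsum (fun n => (hvc n).continuousOn) hBs fun n x hx => (hBb n x hx).2
  have hsplit : ∀ w : ℕ → ℂ, ∀ s t : ℂ, HasSum w s → HasSum (fun n => w (n + 1)) t →
      s = w 0 + t := by
    intro w s t hs ht
    have := (hasSum_nat_add_iff' 1).2 hs
    rw [Finset.sum_range_one] at this
    rw [ht.unique this]; ring
  have hyeq : ∀ x, 0 ≤ x → ∑' n, u n x = a + ∫ t in (0:ℝ)..x, ∑' n, v n t := by
    intro x hx
    obtain ⟨B, hBs, hBb⟩ := hB x hx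
    refine hsplit (fun n => u n x) _ _ (hsu x hx) ?_
    simp only [hus]
    refine intervalIntegral.hasSum_integral_of_dominated_convergence (fun n _ => B n)
      (fun n => (hvc n).aestronglyMeasurable) (fun n => ae_of_all _ fun t ht => ?_)
      (ae_of_all _ fun _ _ => hBs) intervalIntegrable_const (ae_of_all _ fun t ht => ?_)
    · rw [Set.uIoc_of_le hx] at ht
      exact (hBb n t ⟨ht.1.le, ht.2⟩).2
    · rw [Set.uIoc_of_le hx] at ht
      exact hsv t ht.1.le
  have hveq : ∀ x, 0 ≤ x → ∑' n, v n x
      = (a' - ∫ t in (0:ℝ)..x, f t) + ∫ t in (0:ℝ)..x, Q t * ∑' n, u n t := by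
    intro x hx
    obtain ⟨B, hBs, hBb⟩ := hB x hx
    refine hsplit (fun n => v n x) _ _ (hsv x hx) ?_
    simp only [hvs]
    refine intervalIntegral.hasSum_integral_of_dominated_convergence (fun n t => ‖Q t‖ * B n)
      (fun n => ?_) (fun n => ae_of_all _ fun t ht => ?_)
      (ae_of_all _ fun _ _ => hBs.mul_left _) ?_ (ae_of_all _ fun t ht => ?_)
    · exact ((hQ 0 x).mul_continuousOn (huc n).continuousOn).aestronglyMeasurable_restrict_uIoc
    · rw [Set.uIoc_of_le hx] at ht
      rw [norm_mul]
      exact mul_le_mul_of_nonneg_left (hBb n t ⟨ht.1.le, ht.2⟩).1 (norm_nonneg _)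
    · simp only [tsum_mul_left]
      exact (hQ 0 x).norm.mul_const _
    · rw [Set.uIoc_of_le hx] at ht
      exact (hsu t ht.1.le).mul_left _
  have hy0 : ∑' n, u n 0 = a := by simpa using hyeq 0 le_rfl
  have hv0' : ∑' n, v n 0 = a' := by simpa using hveq 0 le_rfl
  refine ⟨fun x => ∑' n, u n x, fun x => ∑' n, v n x, ⟨⟨fun b hb => ?_, fun x hx => ?_⟩,
    fun b hb => ?_, fun x hx => ?_⟩, hy0, hv0'⟩
  · exact (hcv b hb).intervalIntegrable
  · simp only [hy0]; exact hyeq x hx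
  · exact ((hQ 0 b).mul_continuousOn (hcu b hb)).sub (hf 0 b)
  · simp only [hv0']
    rw [intervalIntegral.integral_sub ((hQ 0 x).mul_continuousOn (hcu x hx)) (hf 0 x), hveq x hx]
    ring

/-- Solution of the inhomogeneous equation with zero data at `b`, for a forcing term supported in
`[0,b]`; it is the reflection of a forward solution, hence can be continued by zero. -/
lemma exists_isSol_backward {Q f : ℝ → ℂ} (hQ : ∀ a b, IntervalIntegrable Q volume a b)
    (hf : ∀ a b, IntervalIntegrable f volume a b) {b : ℝ}
    (hfb : ∀ x, b < x → f x = 0) :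
    ∃ y y' : ℝ → ℂ, IsSol Q f y y' ∧ ∀ x, b ≤ x → y x = 0 ∧ y' x = 0 := by
  have hrefl : ∀ {g : ℝ → ℂ}, (∀ a b, IntervalIntegrable g volume a b) →
      ∀ c d, IntervalIntegrable (fun t => g (b - t)) volume c d := by
    intro g hg c d
    have h := (hg (b - c) (b - d)).comp_sub_left b
    rwa [sub_sub_cancel, sub_sub_cancel] at h
  obtain ⟨Y, Y', ⟨h1, h2⟩, hY0, hY0'⟩ := exists_isSol (hrefl hQ) (hrefl hf) 0 0
  have h2n : LocACOn (fun x => -Y' x) (fun x => -(Q (b - x) * Y x - f (b - x))) 0 := by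
    refine ⟨fun c hc => (h2.1 c hc).neg, fun x hx => ?_⟩
    simp only [intervalIntegral.integral_neg]
    rw [h2.2 x hx]; ring
  refine ⟨fun x => Y (max (b - x) 0), fun x => -Y' (max (b - x) 0), ⟨?_, ?_⟩, fun x hx => ?_⟩
  · refine (h1.reflect hY0 b).congr fun x _ => ?_
    rcases le_total 0 (b - x) with h | h
    · simp [Set.indicator, h]
    · rcases h.eq_or_lt with h | h
      · simp [h, Set.indicator]
      · simp [Set.indicator, not_le.2 h, h.le, hY0']
  · refine (h2n.reflect (by simp [hY0']) b).congr fun x _ => ?_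
    dsimp only
    rcases le_or_gt 0 (b - x) with h | h
    · rw [Set.indicator_of_mem (Set.mem_Ici.2 h), max_eq_left h, sub_sub_cancel, neg_neg]
    · rw [Set.indicator_of_notMem (by simpa using h), max_eq_right h.le, hY0,
        hfb x (by linarith)]
      simp
  · simp [max_eq_right (sub_nonpos.2 hx), hY0, hY0']

/-! ### Range of the minimal operator and density -/

/-- Fredholm alternative on `[0,b]`: if `f` is orthogonal (bilinearly) to the solution `φ` that
satisfies the boundary condition, then `-y'' + Q y = f` has a solution satisfying the boundary
condition and vanishing beyond `b`. The Wronskian of `φ` and the solution with zero data at `b`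
vanishes at `b`, and its increment over `[0,b]` is `-∫ f φ = 0`. -/
lemma exists_compactSupport_isSol {Q f φ φ' : ℝ → ℂ} {α₀ α₁ : ℂ}
    (hQ : ∀ a b, IntervalIntegrable Q volume a b)
    (hf : ∀ a b, IntervalIntegrable f volume a b) {b : ℝ} (hb : 0 ≤ b)
    (hfb : ∀ x, b < x → f x = 0) (hφ : IsSol Q 0 φ φ') (hφ0 : φ 0 = α₁) (hφ0' : φ' 0 = -α₀)
    (horth : ∫ x in (0:ℝ)..b, f x * φ x = 0) :
    ∃ y y' : ℝ → ℂ, IsSol Q f y y' ∧ (∀ x, b ≤ x → y x = 0) ∧ α₀ * y 0 + α₁ * y' 0 = 0 := by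
  obtain ⟨y, y', hy, hyb⟩ := exists_isSol_backward hQ hf hfb
  refine ⟨y, y', hy, fun x hx => (hyb x hx).1, ?_⟩
  have h1 := hφ.1.mul hy.2
  have h2 := hy.1.mul hφ.2
  have e1 := h1.2 b hb
  have e2 := h2.2 b hb
  have e3 := intervalIntegral.integral_sub (h1.1 b hb) (h2.1 b hb)
  have e4 : ∫ x in (0:ℝ)..b, ((φ' x * y' x + φ x * (Q x * y x - f x))
      - (y' x * φ' x + y x * (Q x * φ x - (0 : ℝ → ℂ) x))) = 0 := by
    rw [← neg_eq_zero, ← intervalIntegral.integral_neg, ← horth]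
    refine intervalIntegral.integral_congr fun x _ => ?_
    simp only [Pi.zero_apply]
    ring
  rw [e4] at e3
  simp only [(hyb b le_rfl).1, (hyb b le_rfl).2, hφ0, hφ0', mul_zero, zero_mul] at e1 e2
  linear_combination e2 - e1 + e3

/-- If `φ ∉ L₂`, the compactly supported functions bilinearly orthogonal to `φ` are dense in `L₂`:
cut `h` off at `b₁` and correct by a multiple `c` of `conj φ` on `[0,b₂]`. Orthogonality forces the
squared norm of the correction to be `|∫₀^{b₁} h φ|² / ∫₀^{b₂} |φ|²`, which tends to `0` as
`b₂ → ∞`. -/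
lemma exists_orthogonal_approx {φ h : ℝ → ℂ} (hφc : ContinuousOn φ (Set.Ici 0))
    (hφ : ¬ MemL2 (fun _ => 1) φ) (hh : MemL2 (fun _ => 1) h) {ε : ℝ} (hε : 0 < ε) :
    ∃ (b : ℝ) (f : ℝ → ℂ), 0 ≤ b ∧ (∀ c d, IntervalIntegrable f volume c d) ∧
      (∀ x, b < x → f x = 0) ∧ MemLp f 2 (volume.restrict (Set.Ici (0:ℝ))) ∧
      ∫ x in (0:ℝ)..b, f x * φ x = 0 ∧ ∫ x in Set.Ici (0:ℝ), ‖f x - h x‖ ^ 2 < ε := by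
  have hhi : IntegrableOn (fun x => ‖h x‖ ^ 2) (Set.Ici (0:ℝ)) := by simpa using hh.2
  have hhL : MemLp h 2 (volume.restrict (Set.Ici (0:ℝ))) :=
    (memLp_two_iff_integrable_sq_norm hh.1).2 hhi
  have hmeas : ∀ b : ℝ, MeasurableSet (Set.Icc 0 b) := fun b => measurableSet_Icc
  have hcutL : ∀ b : ℝ, MemLp ((Set.Icc 0 b).indicator h) 2 (volume.restrict (Set.Ici (0:ℝ))) :=
    fun b => hhL.indicator (hmeas b)
  obtain ⟨b₁, hb₁, htail⟩ : ∃ b : ℝ, 0 ≤ b ∧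
      ∫ x in Set.Ici (0:ℝ), ‖(Set.Icc 0 b).indicator h x - h x‖ ^ 2 < ε / 4 := by
    have hlim : Tendsto (fun n : ℕ => ∫ x in Set.Ici (0:ℝ),
        ‖(Set.Icc 0 (n:ℝ)).indicator h x - h x‖ ^ 2) atTop
        (𝓝 (∫ _ in Set.Ici (0:ℝ), (0:ℝ))) := by
      refine tendsto_integral_of_dominated_convergence (fun x => ‖h x‖ ^ 2) (fun n => ?_) hhi
        (fun n => ae_of_all _ fun x => ?_) ?_
      · exact (((hcutL n).1.sub hh.1).norm.pow 2)
      · by_cases hx : x ∈ Set.Icc 0 (n:ℝ)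
        · simp [hx]
        · simp [hx]
      · rw [ae_restrict_iff' measurableSet_Ici]
        refine ae_of_all _ fun x hx => ?_
        refine tendsto_const_nhds.congr' ?_
        filter_upwards [eventually_ge_atTop ⌈x⌉₊] with n hn
        have : x ∈ Set.Icc 0 (n:ℝ) := ⟨hx, (Nat.ceil_le.1 hn)⟩
        simp [this]
    rw [integral_zero] at hlim
    obtain ⟨n, hn⟩ := (hlim.eventually (gt_mem_nhds (by positivity : (0:ℝ) < ε / 4))).exists
    exact ⟨n, n.cast_nonneg, hn⟩
  set I : ℂ := ∫ x in (0:ℝ)..b₁, h x * φ x with hI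
  have hsq : ∀ b : ℝ, IntegrableOn (fun x => ‖φ x‖ ^ 2) (Set.Icc 0 b) := fun b =>
    ((hφc.mono Set.Icc_subset_Ici_self).norm.pow 2).integrableOn_compact isCompact_Icc
  obtain ⟨b₂, hb₂, hN⟩ : ∃ b, b₁ ≤ b ∧
      4 * ‖I‖ ^ 2 / ε < ∫ x in (0:ℝ)..b, ‖φ x‖ ^ 2 := by
    by_contra! hcon
    refine hφ ⟨hφc.aestronglyMeasurable measurableSet_Ici, ?_⟩
    simp only [one_mul]
    rw [integrableOn_Ici_iff_integrableOn_Ioi]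
    refine integrableOn_Ioi_of_intervalIntegral_norm_bounded (4 * ‖I‖ ^ 2 / ε) 0
      (b := fun b : ℝ => b) (l := atTop) (fun b => (hsq b).mono_set Set.Ioc_subset_Icc_self)
      tendsto_id ?_
    filter_upwards [eventually_ge_atTop b₁] with b hb
    simpa using hcon b hb
  set N : ℝ := ∫ x in (0:ℝ)..b₂, ‖φ x‖ ^ 2 with hNdef
  have hb₂0 : 0 ≤ b₂ := hb₁.trans hb₂
  have hNpos : 0 < N := lt_of_le_of_lt (by positivity) hN
  set c : ℂ := I / N with hc
  set g : ℝ → ℂ := (Set.Icc 0 b₂).indicator (fun x => (starRingEnd ℂ) (φ x)) with hg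
  have hφconj : ContinuousOn (fun x => (starRingEnd ℂ) (φ x)) (Set.Icc 0 b₂) :=
    Complex.continuous_conj.comp_continuousOn (hφc.mono Set.Icc_subset_Ici_self)
  have hgint : Integrable g :=
    (integrable_indicator_iff (hmeas b₂)).2 (hφconj.integrableOn_compact isCompact_Icc)
  have hgsq : ∀ x, ‖g x‖ ^ 2 = (Set.Icc 0 b₂).indicator (fun x => ‖φ x‖ ^ 2) x := by
    intro x
    by_cases hx : x ∈ Set.Icc 0 b₂
    · simp [hg, hx]
    · simp [hg, hx]
  have hgL : MemLp g 2 (volume.restrict (Set.Ici (0:ℝ))) := by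
    rw [memLp_two_iff_integrable_sq_norm hgint.1.restrict]
    simp only [hgsq]
    exact ((integrable_indicator_iff (hmeas b₂)).2 (hsq b₂)).integrableOn
  have hgN : ∫ x in Set.Ici (0:ℝ), ‖g x‖ ^ 2 = N := by
    simp only [hgsq]
    rw [setIntegral_indicator (hmeas b₂), Set.inter_eq_right.2 Set.Icc_subset_Ici_self,
      integral_Icc_eq_integral_Ioc, hNdef, intervalIntegral.integral_of_le hb₂0]
  have hhIcc : IntegrableOn h (Set.Icc 0 b₁) := by
    have : MemLp h 2 (volume.restrict (Set.Icc 0 b₁)) :=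
      hhL.mono_measure (Measure.restrict_mono_set _ Set.Icc_subset_Ici_self)
    exact this.integrable (by norm_num)
  have hcutint : Integrable ((Set.Icc 0 b₁).indicator h) :=
    (integrable_indicator_iff (hmeas b₁)).2 hhIcc
  have hcsq : ‖c‖ ^ 2 * N < ε / 4 := by
    have h1 : ‖c‖ ^ 2 * N = ‖I‖ ^ 2 / N := by
      rw [hc, norm_div, Complex.norm_real, Real.norm_of_nonneg hNpos.le]
      field_simp
    rw [h1, div_lt_iff₀ hNpos]
    rw [div_lt_iff₀ hε] at hN
    linarith
  refine ⟨b₂, fun x => (Set.Icc 0 b₁).indicator h x - c * g x, hb₂0, fun s t => ?_,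
    fun x hx => ?_, ?_, ?_, ?_⟩
  · exact (hcutint.sub (hgint.const_mul c)).intervalIntegrable
  · have h1 : x ∉ Set.Icc 0 b₁ := fun h => absurd h.2 (by linarith)
    have h2 : x ∉ Set.Icc 0 b₂ := fun h => absurd h.2 (by linarith)
    simp [hg, h1, h2]
  · exact (hcutL b₁).sub (hgL.const_mul c)
  · have hs : Set.uIcc 0 b₂ ⊆ Set.Ici (0:ℝ) := by
      rw [Set.uIcc_of_le hb₂0]; exact Set.Icc_subset_Ici_self
    have i1 : IntervalIntegrable (fun x => (Set.Icc 0 b₁).indicator h x * φ x) volume 0 b₂ :=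
      hcutint.intervalIntegrable.mul_continuousOn (hφc.mono hs)
    have i2 : IntervalIntegrable (fun x => c * g x * φ x) volume 0 b₂ :=
      (hgint.const_mul c).intervalIntegrable.mul_continuousOn (hφc.mono hs)
    have v1 : ∫ x in (0:ℝ)..b₂, (Set.Icc 0 b₁).indicator h x * φ x = I := by
      have : ∀ x, (Set.Icc 0 b₁).indicator h x * φ x
          = (Set.Icc 0 b₁).indicator (fun x => h x * φ x) x := by
        intro x; by_cases hx : x ∈ Set.Icc 0 b₁ <;> simp [hx]
      simp only [this]
      have hset : Set.Ioc 0 b₂ ∩ Set.Icc 0 b₁ = Set.Ioc 0 b₁ := by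
        ext x
        simp only [Set.mem_inter_iff, Set.mem_Ioc, Set.mem_Icc]
        exact ⟨fun h => ⟨h.1.1, h.2.2⟩, fun h => ⟨⟨h.1, h.2.trans hb₂⟩, h.1.le, h.2⟩⟩
      rw [intervalIntegral.integral_of_le hb₂0, setIntegral_indicator (hmeas b₁), hset, hI,
        intervalIntegral.integral_of_le hb₁]
    have v2 : ∫ x in (0:ℝ)..b₂, c * g x * φ x = c * N := by
      rw [hNdef, ← intervalIntegral.integral_ofReal, ← intervalIntegral.integral_const_mul]
      refine intervalIntegral.integral_congr fun x hx => ?_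
      rw [Set.uIcc_of_le hb₂0] at hx
      simp only [hg, Set.indicator_of_mem hx]
      rw [mul_assoc, Complex.conj_mul']
      push_cast
      rfl
    simp only [sub_mul]
    rw [intervalIntegral.integral_sub i1 i2, v1, v2, hc,
      div_mul_cancel₀ _ (by exact_mod_cast hNpos.ne'), sub_self]
  · have hA : Integrable (fun x => ‖(Set.Icc 0 b₁).indicator h x - h x‖ ^ 2)
        (volume.restrict (Set.Ici (0:ℝ))) :=
      (memLp_two_iff_integrable_sq_norm ((hcutL b₁).sub hhL).1).1 ((hcutL b₁).sub hhL)
    have hG : Integrable (fun x => ‖g x‖ ^ 2) (volume.restrict (Set.Ici (0:ℝ))) :=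
      (memLp_two_iff_integrable_sq_norm hgL.1).1 hgL
    calc ∫ x in Set.Ici (0:ℝ), ‖(Set.Icc 0 b₁).indicator h x - c * g x - h x‖ ^ 2
        ≤ ∫ x in Set.Ici (0:ℝ), (2 * ‖(Set.Icc 0 b₁).indicator h x - h x‖ ^ 2
            + 2 * ‖c‖ ^ 2 * ‖g x‖ ^ 2) := by
          refine integral_mono_of_nonneg (ae_of_all _ fun x => by positivity)
            ((hA.const_mul 2).add (hG.const_mul (2 * ‖c‖ ^ 2))) (ae_of_all _ fun x => ?_)
          have h1 : ‖(Set.Icc 0 b₁).indicator h x - c * g x - h x‖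
              ≤ ‖(Set.Icc 0 b₁).indicator h x - h x‖ + ‖c‖ * ‖g x‖ := by
            rw [← norm_mul, sub_right_comm]
            exact norm_sub_le _ _
          have h2 := pow_le_pow_left₀ (norm_nonneg _) h1 2
          dsimp only
          nlinarith [sq_nonneg (‖(Set.Icc 0 b₁).indicator h x - h x‖ - ‖c‖ * ‖g x‖)]
      _ = 2 * (∫ x in Set.Ici (0:ℝ), ‖(Set.Icc 0 b₁).indicator h x - h x‖ ^ 2)
            + 2 * (‖c‖ ^ 2 * N) := by
          rw [integral_add (hA.const_mul 2) (hG.const_mul (2 * ‖c‖ ^ 2)), integral_const_mul,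
            integral_const_mul, hgN]
          ring
      _ < ε := by linarith

/-- The definite case: if `lam ∈ 𝒩` is not an eigenvalue of `L_U`, then the
image under `y ↦ -y'' + (q - lam) y` of the set of compactly supported
functions in the domain of `L_U` is dense in `L₂(ℝ₊)`. -/
theorem statement12 (q q' : ℝ → ℂ) (α₀ α₁ : ℂ) (hα : ‖α₀‖ + ‖α₁‖ ≠ 0)
    (lam : ℂ) (hlam : lam ∈ NSet q q')
    (hnoev : ¬ ∃ y y', IsSol (fun x => q x - lam) 0 y y' ∧ NontrivialSol y ∧
      MemL2 (fun _ => 1) y ∧ α₀ * y 0 + α₁ * y' 0 = 0) :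
    ∀ h : ℝ → ℂ, MemL2 (fun _ => 1) h → ∀ ε > (0:ℝ),
      ∃ y y' y'' : ℝ → ℂ, LocACOn y y' 0 ∧ LocACOn y' y'' 0 ∧
        (∃ b, 0 ≤ b ∧ ∀ x, b ≤ x → y x = 0) ∧
        MemL2 (fun _ => 1) (fun x => -y'' x + q x * y x) ∧
        α₀ * y 0 + α₁ * y' 0 = 0 ∧
        (∫ x in Set.Ici (0:ℝ), ‖(-y'' x + (q x - lam) * y x) - h x‖ ^ 2) < ε := by
  intro h hh ε hε
  have hQ0 : ∀ b, 0 ≤ b → IntervalIntegrable (fun x => q x - lam) volume 0 b := by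
    intro b hb
    obtain ⟨x₁, C, -, hA⟩ := hlam
    rw [intervalIntegrable_iff_integrableOn_Icc_of_le hb]
    exact hA.1.integrableOn_compact_subset Set.Icc_subset_Ici_self isCompact_Icc
  set Q : ℝ → ℂ := Set.indicator (Set.Ici 0) (fun x => q x - lam) with hQdef
  have hQ : ∀ a b, IntervalIntegrable Q volume a b := ii_indicator hQ0
  have hQx : ∀ x, 0 ≤ x → Q x = q x - lam := fun x hx => Set.indicator_of_mem hx _
  obtain ⟨φ, φ', hφ, hφ0, hφ0'⟩ := exists_isSol hQ
    (f := 0) (fun _ _ => intervalIntegrable_const) α₁ (-α₀)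
  -- the data `(α₁, -α₀)` are nonzero, so `φ` does not vanish identically
  have hφnt : NontrivialSol φ := by
    by_contra hcon
    have hz : ∀ x, 0 ≤ x → φ x = 0 := by
      intro x hx
      by_contra hne
      exact hcon ⟨x, hx, hne⟩
    have hα₁ : α₁ = 0 := by rw [← hφ0]; exact hz 0 le_rfl
    have hα₀ : α₀ = 0 := by
      have hR : HasDerivWithinAt φ (φ' 0) (Set.Ici 0) 0 := by
        have hc := (hφ.2.continuousOn 0 (by simp))
        have hd := intervalIntegral.integral_hasDerivWithinAt_right (a := 0) (b := 0)
          (f := φ') (s := Set.Ici 0) (t := Set.Ioi 0) (by simp)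
          (ContinuousOn.stronglyMeasurableAtFilter_nhdsWithin
            (hφ.2.continuousOn.mono Set.Ioi_subset_Ici_self) measurableSet_Ioi 0)
          (hc.mono Set.Ioi_subset_Ici_self)
        exact (hd.const_add (φ 0)).congr (fun x hx => hφ.1.2 x hx) (hφ.1.2 0 le_rfl)
      have hZ : HasDerivWithinAt φ 0 (Set.Ici 0) 0 :=
        (hasDerivWithinAt_const (0:ℝ) (Set.Ici (0:ℝ)) (0:ℂ)).congr hz (hz 0 le_rfl)
      have := (uniqueDiffWithinAt_Ici (0:ℝ)).eq_deriv _ hR hZ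
      rw [hφ0'] at this
      exact neg_eq_zero.1 this
    exact hα (by simp [hα₀, hα₁])
  have hφL : ¬ MemL2 (fun _ => 1) φ := by
    intro hmem
    refine hnoev ⟨φ, φ', ⟨hφ.1, hφ.2.congr fun x hx => by rw [hQx x hx]⟩, hφnt, hmem, ?_⟩
    rw [hφ0, hφ0']; ring
  obtain ⟨b, f, hb, hfi, hfb, hfL, horth, happrox⟩ :=
    exists_orthogonal_approx hφ.1.continuousOn hφL hh hε
  obtain ⟨y, y', hy, hyb, hbc⟩ :=
    exists_compactSupport_isSol hQ hfi hb hfb hφ hφ0 hφ0' horth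
  refine ⟨y, y', fun x => (q x - lam) * y x - f x, hy.1,
    hy.2.congr fun x hx => by rw [hQx x hx], ⟨b, hb, hyb⟩, ?_, hbc, ?_⟩
  · -- `-y'' + q y = f + lam y`, and `y` is continuous with compact support
    have hyc := hy.1.continuousOn
    have hyL : MemLp y 2 (volume.restrict (Set.Ici (0:ℝ))) := by
      rw [memLp_two_iff_integrable_sq_norm (hyc.aestronglyMeasurable measurableSet_Ici)]
      have h1 : IntegrableOn (fun x => ‖y x‖ ^ 2) (Set.Icc 0 b) :=
        ((hyc.mono Set.Icc_subset_Ici_self).norm.pow 2).integrableOn_compact isCompact_Icc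
      refine IntegrableOn.of_forall_sdiff_eq_zero h1 measurableSet_Ici fun x hx => ?_
      have : b ≤ x := by
        by_contra hlt
        exact hx.2 ⟨hx.1, (not_le.1 hlt).le⟩
      simp [hyb x this]
    have hL := hfL.add (hyL.const_mul lam)
    have heq : (fun x => -((q x - lam) * y x - f x) + q x * y x) = f + fun x => lam * y x := by
      funext x
      simp only [Pi.add_apply]
      ring
    rw [heq]
    refine ⟨hL.1, ?_⟩
    simpa [IntegrableOn] using (memLp_two_iff_integrable_sq_norm hL.1).1 hL
  · have heq : ∀ x, (-((q x - lam) * y x - f x) + (q x - lam) * y x) - h x = f x - h x := by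
      intro x; ring
    simpa only [heq] using happrox
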